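/- arXiv:2207.01597 — 6 statements merged into one kernel-verified Lean document; each statement's English description precedes it below -/
import Mathlib

section
/- If 0 ≤ a < b ≤ 1, then (1/(4π))∫_a^b f(t) dt = μ_ST([√(1+a)/2, √(1+b)/2]) + μ_ST([√(1−b)/2, √(1−a)/2]). -/
noncomputable section

/-- The `O(3)` (Batman) density function. -/
def fBat (t : ℝ) : ℝ :=
  if 1 < |t| ∧ |t| < 3 then Real.sqrt ((3 - |t|) / (1 + |t|))
  else if |t| < 1 then Real.sqrt ((3 - t) / (1 + t)) + Real.sqrt ((3 + t) / (1 - t))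
  else 0

/-- The semicircular (Sato–Tate) measure of `[a,b]`. -/
def muST (a b : ℝ) : ℝ := (2 / Real.pi) * ∫ x in a..b, Real.sqrt (1 - x ^ 2)

/-!
If `X` has the Sato–Tate law, then `(2 X) ^ 2` has the Marchenko–Pastur law of ratio one, whose
density is `√((4 - s) / s) / (2 π)`. On `|t| < 1` the Batman function is `2 π` times the sum of
this density at `1 + t` and at `1 - t`, so undoing the substitution `s = (2 x) ^ 2` in each summand
turns its integral into a Sato–Tate measure.
-/

open Real Set MeasureTheory

section SqrtSubstitution

variable {c d : ℝ} (g : ℝ → ℝ)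

theorem hasDerivAt_sqrt_of_mem_uIoo (hc : 0 ≤ c) (hd : 0 ≤ d) {s : ℝ} (hs : s ∈ uIoo c d) :
    HasDerivAt (√·) (1 / (2 * √s)) s :=
  hasDerivAt_sqrt ((le_min hc hd).trans_lt hs.1).ne'

theorem integral_comp_sqrt_mul_deriv (hc : 0 ≤ c) (hd : 0 ≤ d) :
    ∫ s in c..d, g (√s) * (1 / (2 * √s)) = ∫ x in √c..√d, g x :=
  intervalIntegral.integral_comp_mul_deriv_of_deriv_nonneg continuous_sqrt.continuousOn
    (fun _ hs => hasDerivAt_sqrt_of_mem_uIoo hc hd hs) (fun _ _ => by positivity)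

theorem intervalIntegrable_comp_sqrt_mul_deriv_iff (hc : 0 ≤ c) (hd : 0 ≤ d) :
    IntervalIntegrable (fun s => g (√s) * (1 / (2 * √s))) volume c d ↔
      IntervalIntegrable g volume (√c) (√d) :=
  intervalIntegral.integrable_comp_mul_deriv_iff_of_deriv_nonneg continuous_sqrt.continuousOn
    (fun _ hs => hasDerivAt_sqrt_of_mem_uIoo hc hd hs) (fun _ _ => by positivity)

end SqrtSubstitution

/-- The density of the Marchenko–Pastur law of ratio one, which is supported on `[0, 4]`. Outside
`(0, 4)` the radicand is nonpositive or a division by zero, so the formula gives `0` there. -/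
def marchenkoPasturPDF (s : ℝ) : ℝ := √((4 - s) / s) / (2 * π)

/-- The density of the quarter-circle law on `[0, 2]`, the law of `|2 X|` for `X` of Sato–Tate law.
It is extended evenly to negative `x`, which makes it continuous on the whole line. -/
def quarterCirclePDF (x : ℝ) : ℝ := 2 / π * √(1 - (x / 2) ^ 2)

theorem continuous_quarterCirclePDF : Continuous quarterCirclePDF := by
  unfold quarterCirclePDF
  fun_prop

theorem integral_quarterCirclePDF (a b : ℝ) :
    ∫ x in a..b, quarterCirclePDF x = 2 * muST (a / 2) (b / 2) := by
  simp only [quarterCirclePDF, muST, intervalIntegral.integral_const_mul,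
    intervalIntegral.integral_comp_div (fun x => √(1 - x ^ 2)) two_ne_zero, smul_eq_mul]
  ring

theorem marchenkoPasturPDF_eq_quarterCirclePDF_sqrt_mul {s : ℝ} (hs : 0 ≤ s) :
    marchenkoPasturPDF s = quarterCirclePDF (√s) * (1 / (2 * √s)) := by
  have radicand_eq : 1 - (√s / 2) ^ 2 = (4 - s) / 2 ^ 2 := by
    rw [div_pow, sq_sqrt hs]
    ring
  rw [marchenkoPasturPDF, quarterCirclePDF, radicand_eq, sqrt_div' _ (sq_nonneg 2),
    sqrt_sq zero_le_two, sqrt_div' _ hs]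
  ring

section MarchenkoPasturIntegral

variable {c d : ℝ}

theorem eqOn_marchenkoPasturPDF_uIcc (hc : 0 ≤ c) (hd : 0 ≤ d) :
    EqOn marchenkoPasturPDF (fun s => quarterCirclePDF (√s) * (1 / (2 * √s))) (uIcc c d) :=
  fun _ hs => marchenkoPasturPDF_eq_quarterCirclePDF_sqrt_mul ((le_min hc hd).trans hs.1)

theorem intervalIntegrable_marchenkoPasturPDF (hc : 0 ≤ c) (hd : 0 ≤ d) :
    IntervalIntegrable marchenkoPasturPDF volume c d :=
  ((intervalIntegrable_comp_sqrt_mul_deriv_iff quarterCirclePDF hc hd).2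
    (continuous_quarterCirclePDF.intervalIntegrable _ _)).congr_uIoo
    ((eqOn_marchenkoPasturPDF_uIcc hc hd).symm.mono uIoo_subset_uIcc_self)

theorem integral_marchenkoPasturPDF (hc : 0 ≤ c) (hd : 0 ≤ d) :
    ∫ s in c..d, marchenkoPasturPDF s = 2 * muST (√c / 2) (√d / 2) := by
  rw [intervalIntegral.integral_congr (eqOn_marchenkoPasturPDF_uIcc hc hd),
    integral_comp_sqrt_mul_deriv quarterCirclePDF hc hd, integral_quarterCirclePDF]

end MarchenkoPasturIntegral

theorem fBat_eq_marchenkoPasturPDF_add {t : ℝ} (ht : |t| < 1) :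
    fBat t = 2 * π * (marchenkoPasturPDF (1 + t) + marchenkoPasturPDF (1 - t)) := by
  have hnum_add : 4 - (1 + t) = 3 - t := by ring
  have hnum_sub : 4 - (1 - t) = 3 + t := by ring
  rw [fBat, if_neg fun h => ht.not_gt h.1, if_pos ht, marchenkoPasturPDF, marchenkoPasturPDF,
    hnum_add, hnum_sub]
  field_simp

theorem batman_as_semicircle_low_general {a b : ℝ} (ha : a ∈ Icc (-1) 1) (hb : b ∈ Icc (-1) 1) :
    1 / (4 * π) * ∫ t in a..b, fBat t
      = muST (√(1 + a) / 2) (√(1 + b) / 2) + muST (√(1 - b) / 2) (√(1 - a) / 2) := by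
  have ha_add : 0 ≤ 1 + a := by linarith [ha.1]
  have hb_add : 0 ≤ 1 + b := by linarith [hb.1]
  have ha_sub : 0 ≤ 1 - a := by linarith [ha.2]
  have hb_sub : 0 ≤ 1 - b := by linarith [hb.2]
  have fBat_eqOn : EqOn fBat
      (fun t => 2 * π * (marchenkoPasturPDF (1 + t) + marchenkoPasturPDF (1 - t))) (uIoo a b) :=
    fun _ ht => fBat_eq_marchenkoPasturPDF_add (abs_lt.2 (uIoo_subset_Ioo ha hb ht))
  have integrable_add : IntervalIntegrable (fun t => marchenkoPasturPDF (1 + t)) volume a b := by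
    simpa using (intervalIntegrable_marchenkoPasturPDF ha_add hb_add).comp_add_left 1
  have integrable_sub : IntervalIntegrable (fun t => marchenkoPasturPDF (1 - t)) volume a b := by
    simpa using (intervalIntegrable_marchenkoPasturPDF ha_sub hb_sub).comp_sub_left 1
  rw [intervalIntegral.integral_congr_uIoo fBat_eqOn, intervalIntegral.integral_const_mul,
    intervalIntegral.integral_add integrable_add integrable_sub,
    intervalIntegral.integral_comp_add_left, intervalIntegral.integral_comp_sub_left,
    integral_marchenkoPasturPDF ha_add hb_add, integral_marchenkoPasturPDF hb_sub ha_sub]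
  field_simp
  norm_num

theorem batman_as_semicircle_low (a b : ℝ) (ha : 0 ≤ a) (hab : a < b) (hb : b ≤ 1) :
    (1 / (4 * Real.pi)) * ∫ t in a..b, fBat t
      = muST (Real.sqrt (1 + a) / 2) (Real.sqrt (1 + b) / 2)
        + muST (Real.sqrt (1 - b) / 2) (Real.sqrt (1 - a) / 2) := by
  exact batman_as_semicircle_low_general ⟨by linarith, by linarith⟩ ⟨by linarith, hb⟩

end
end

section
/- If 0 ≤ a ≤ 1 < b ≤ 3, then (1/(4π))∫_a^b f(t) dt = μ_ST([√(1+a)/2, √(1+b)/2]) + μ_ST([0, √(1−a)/2]). -/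
noncomputable section

/-!
Both sides are governed by the Marchenko–Pastur law: off `t = ±1` the Batman density is
`f t = 2π (ρ (1 + t) + ρ (1 - t))`, where `ρ` is the Marchenko–Pastur density on `(0, 4)`, and `ρ`
is the density of `4 x²` for `x` semicircular. Hence `μ_ST [0, √u / 2]` is half the
Marchenko–Pastur distribution function, and
`t ↦ μ_ST [0, √(1 + t) / 2] - μ_ST [0, √(1 - t) / 2]` is a continuous monotone primitive of
`f / (4π)` away from the two singularities `±1`.
-/

section

open Real Set MeasureTheory

theorem integral_eq_sub_of_monotoneOn_of_hasDerivAt_off_countable {F f : ℝ → ℝ} {a b : ℝ}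
    {s : Set ℝ} (hs : s.Countable) (hmono : MonotoneOn F (uIcc a b))
    (hcont : ContinuousOn F (uIcc a b))
    (hderiv : ∀ x ∈ Ioo (min a b) (max a b) \ s, HasDerivAt F (f x) x) :
    ∫ x in a..b, f x = F b - F a := by
  have hae : ∀ᵐ x, x ∈ uIoc a b → deriv F x = f x := by
    filter_upwards [(hs.insert (max a b)).ae_notMem volume] with x hx hxab
    rw [mem_insert_iff, not_or] at hx
    exact (hderiv x ⟨⟨hxab.1, hxab.2.lt_of_ne hx.1⟩, hx.2⟩).deriv
  have hint : IntervalIntegrable f volume a b :=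
    hmono.intervalIntegrable_deriv.congr_ae
      ((ae_restrict_iff' measurableSet_uIoc).2 hae)
  exact integral_eq_of_hasDerivAt_off_countable F f hs hcont hderiv hint

theorem muST_sub_muST (a b c : ℝ) : muST a c - muST a b = muST b c := by
  have hint (c d : ℝ) : IntervalIntegrable (fun x : ℝ ↦ √(1 - x ^ 2)) volume c d :=
    Continuous.intervalIntegrable (by fun_prop) c d
  rw [muST, muST, ← mul_sub,
    intervalIntegral.integral_interval_sub_left (hint a c) (hint a b), ← muST]

theorem hasDerivAt_muST (a x : ℝ) : HasDerivAt (muST a) (2 / π * √(1 - x ^ 2)) x := by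
  have hcont : Continuous fun x : ℝ ↦ √(1 - x ^ 2) := by fun_prop
  exact (hcont.integral_hasStrictDerivAt a x).hasDerivAt.const_mul (2 / π)

theorem continuous_muST (a : ℝ) : Continuous (muST a) :=
  continuous_iff_continuousAt.2 fun x ↦ (hasDerivAt_muST a x).continuousAt

theorem monotone_muST (a : ℝ) : Monotone (muST a) :=
  monotone_of_hasDerivAt_nonneg (hasDerivAt_muST a) fun _ ↦ by positivity

/-- The density of the Marchenko–Pastur law with parameter `1`. Outside `(0, 4)` the quotient is
nonpositive, or `0` by convention at `u = 0`, so that the square root vanishes there. -/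
def marchenkoPasturDensity (u : ℝ) : ℝ := √((4 - u) / u) / (2 * π)

theorem marchenkoPasturDensity_of_nonpos {u : ℝ} (hu : u ≤ 0) : marchenkoPasturDensity u = 0 := by
  rw [marchenkoPasturDensity,
    sqrt_eq_zero_of_nonpos (div_nonpos_of_nonneg_of_nonpos (by linarith) hu), zero_div]

theorem hasDerivAt_muST_zero_sqrt_div_two {u : ℝ} (hu : u ≠ 0) :
    HasDerivAt (fun v ↦ muST 0 (√v / 2)) (marchenkoPasturDensity u / 2) u := by
  rcases hu.lt_or_gt with hneg | hpos
  · rw [marchenkoPasturDensity_of_nonpos hneg.le, zero_div]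
    refine (hasDerivAt_const u (muST 0 0)).congr_of_eventuallyEq ?_
    filter_upwards [gt_mem_nhds hneg] with v hv
    rw [sqrt_eq_zero_of_nonpos hv.le, zero_div]
  · refine ((hasDerivAt_muST 0 (√u / 2)).comp u
      ((hasDerivAt_sqrt hu).div_const 2)).congr_deriv ?_
    have hsqrt : √u ≠ 0 := (sqrt_pos.2 hpos).ne'
    have hweight : √(1 - (√u / 2) ^ 2) = √(4 - u) / 2 := by
      rw [div_pow, sq_sqrt hpos.le, show 1 - u / 2 ^ 2 = (4 - u) / 2 ^ 2 by ring,
        sqrt_div' _ (by positivity), sqrt_sq zero_le_two]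
    rw [hweight, marchenkoPasturDensity, sqrt_div' _ hpos.le]
    field_simp

theorem fBat_of_abs_lt_one {t : ℝ} (ht : |t| < 1) :
    fBat t = √((3 - t) / (1 + t)) + √((3 + t) / (1 - t)) := by
  rw [fBat, if_neg fun h ↦ lt_asymm ht h.1, if_pos ht]

theorem fBat_of_one_lt_abs {t : ℝ} (ht : 1 < |t|) : fBat t = √((3 - |t|) / (1 + |t|)) := by
  rcases lt_or_ge |t| 3 with h3 | h3
  · rw [fBat, if_pos ⟨ht, h3⟩]
  · rw [fBat, if_neg fun h ↦ h3.not_gt h.2, if_neg ht.not_gt,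
      sqrt_eq_zero_of_nonpos (div_nonpos_of_nonpos_of_nonneg (by linarith) (by positivity))]

theorem fBat_eq_marchenkoPasturDensity_add {t : ℝ} (ht : |t| ≠ 1) :
    fBat t = 2 * π * (marchenkoPasturDensity (1 + t) + marchenkoPasturDensity (1 - t)) := by
  have hsqrt (u : ℝ) : 2 * π * marchenkoPasturDensity u = √((4 - u) / u) :=
    mul_div_cancel₀ _ (by positivity)
  rcases ht.lt_or_gt with hlt | hgt
  · rw [fBat_of_abs_lt_one hlt, mul_add, hsqrt, hsqrt,
      show 4 - (1 + t) = 3 - t by ring, show 4 - (1 - t) = 3 + t by ring]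
  · have heven : marchenkoPasturDensity (1 + t) + marchenkoPasturDensity (1 - t)
        = marchenkoPasturDensity (1 + |t|) + marchenkoPasturDensity (1 - |t|) := by
      rcases abs_choice t with h | h <;> rw [h]
      rw [sub_neg_eq_add, ← sub_eq_add_neg, add_comm]
    rw [fBat_of_one_lt_abs hgt, heven,
      marchenkoPasturDensity_of_nonpos (sub_nonpos.2 hgt.le), add_zero, hsqrt,
      show 4 - (1 + |t|) = 3 - |t| by ring]

/-- The primitive of `fBat / (4π)` vanishing at `0`. -/
def batmanPrimitive (t : ℝ) : ℝ := muST 0 (√(1 + t) / 2) - muST 0 (√(1 - t) / 2)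

theorem continuous_batmanPrimitive : Continuous batmanPrimitive := by
  have := continuous_muST 0
  unfold batmanPrimitive
  fun_prop

theorem monotone_batmanPrimitive : Monotone batmanPrimitive := fun s t hst ↦
  sub_le_sub (monotone_muST 0 (by gcongr)) (monotone_muST 0 (by gcongr))

theorem hasDerivAt_batmanPrimitive {t : ℝ} (ht : |t| ≠ 1) :
    HasDerivAt batmanPrimitive (1 / (4 * π) * fBat t) t := by
  have hplus : 1 + t ≠ 0 := fun h ↦ ht (by rw [eq_neg_of_add_eq_zero_right h, abs_neg, abs_one])
  have hminus : 1 - t ≠ 0 := fun h ↦ ht (by rw [← sub_eq_zero.1 h, abs_one])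
  refine (((hasDerivAt_muST_zero_sqrt_div_two hplus).comp_const_add 1 t).sub
    ((hasDerivAt_muST_zero_sqrt_div_two hminus).comp_const_sub 1 t)).congr_deriv ?_
  rw [fBat_eq_marchenkoPasturDensity_add ht]
  field_simp
  ring

theorem integral_fBat (a b : ℝ) :
    1 / (4 * π) * ∫ t in a..b, fBat t = batmanPrimitive b - batmanPrimitive a := by
  rw [← intervalIntegral.integral_const_mul]
  refine integral_eq_sub_of_monotoneOn_of_hasDerivAt_off_countable (s := {1, -1})
    (to_countable _) (monotone_batmanPrimitive.monotoneOn _) continuous_batmanPrimitive.continuousOn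
    fun t ht ↦ hasDerivAt_batmanPrimitive fun habs ↦ ht.2 ?_
  exact eq_or_eq_neg_of_abs_eq habs

/-- The density in `muST` vanishes off `[-1, 1]`, so for `x ≤ y` the value `muST x y` is the
semicircular measure of `[x, y]` also when this interval leaves `[-1, 1]`. -/
theorem batman_as_semicircle_mid_general (a b : ℝ) :
    1 / (4 * π) * ∫ t in a..b, fBat t
      = muST (√((1 + a)⁺) / 2) (√((1 + b)⁺) / 2)
        + muST (√((1 - b)⁺) / 2) (√((1 - a)⁺) / 2) := by
  have hpos (x : ℝ) : √(x⁺) = √x := by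
    rcases le_total 0 x with hx | hx
    · rw [posPart_eq_self.2 hx]
    · rw [posPart_eq_zero.2 hx, sqrt_zero, sqrt_eq_zero_of_nonpos hx]
  simp only [hpos, integral_fBat, batmanPrimitive, ← muST_sub_muST 0 (√_ / 2)]
  ring

end

theorem batman_as_semicircle_mid (a b : ℝ) (ha : 0 ≤ a) (ha1 : a ≤ 1) (hb1 : 1 < b)
    (hb : b ≤ 3) :
    (1 / (4 * Real.pi)) * ∫ t in a..b, fBat t
      = muST (Real.sqrt (1 + a) / 2) (Real.sqrt (1 + b) / 2)
        + muST 0 (Real.sqrt (1 - a) / 2) := by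
  have ha' : 0 ≤ 1 + a := by linarith
  have hb' : 0 ≤ 1 + b := by linarith
  simpa [posPart_eq_self.2, posPart_eq_zero.2, ha', hb', ha1, hb1.le] using
    batman_as_semicircle_mid_general a b

end
end

section
/- If 1 ≤ a < b ≤ 3, then (1/(4π))∫_a^b f(t) dt = μ_ST([√(1+a)/2, √(1+b)/2]). -/
/-!
Up to a constant, the Batman density on `(1, 3)` agrees with the density of `X ^ 2 - 1`, where `X`
follows the semicircle law of radius `2`: substituting `1 + t = u ^ 2` turns
`√((3 - t) / (1 + t)) dt` into `2 √(4 - u ^ 2) du`, and `u = 2 x` rescales to the unit semicircle.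
-/

noncomputable section

lemma fBat_of_one_lt_of_lt_three {t : ℝ} (h₁ : 1 < t) (h₃ : t < 3) :
    fBat t = √((3 - t) / (1 + t)) := by
  have habs : |t| = t := abs_of_pos (by linarith)
  rw [fBat, habs, if_pos ⟨h₁, h₃⟩]

lemma integral_inv_two_mul_sqrt_smul_comp_sqrt {E : Type*} [NormedAddCommGroup E]
    [NormedSpace ℝ E] {a b : ℝ} (ha : 0 ≤ a) (hb : 0 ≤ b) (g : ℝ → E) :
    ∫ t in a..b, (1 / (2 * √t)) • g √t = ∫ u in √a..√b, g u := by
  refine intervalIntegral.integral_deriv_smul_comp_of_deriv_nonneg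
    Real.continuous_sqrt.continuousOn (fun t ht ↦ ?_) (fun t _ ↦ by positivity)
  have ht₀ : 0 < t := (le_min ha hb).trans_lt ht.1
  exact Real.hasDerivAt_sqrt ht₀.ne'

lemma integral_sqrt_sub_div_self {a b : ℝ} (ha : 0 ≤ a) (hb : 0 ≤ b) (c : ℝ) :
    ∫ t in a..b, √((c - t) / t) = 2 * ∫ u in √a..√b, √(c - u ^ 2) := by
  rw [← intervalIntegral.integral_const_mul, ← integral_inv_two_mul_sqrt_smul_comp_sqrt ha hb]
  refine intervalIntegral.integral_congr_uIoo fun t ht ↦ ?_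
  have ht₀ : 0 < t := (le_min ha hb).trans_lt ht.1
  simp only [smul_eq_mul, Real.sqrt_div' _ ht₀.le, Real.sq_sqrt ht₀.le]
  field_simp

lemma integral_sqrt_sq_sub_sq {r : ℝ} (hr : 0 < r) (a b : ℝ) :
    ∫ u in a..b, √(r ^ 2 - u ^ 2) = r ^ 2 * ∫ x in a / r..b / r, √(1 - x ^ 2) := by
  have hscale (u : ℝ) : √(r ^ 2 - u ^ 2) = r * √(1 - (u / r) ^ 2) := by
    have hfactor : r ^ 2 - u ^ 2 = r ^ 2 * (1 - (u / r) ^ 2) := by field_simp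
    rw [hfactor, Real.sqrt_mul (sq_nonneg r), Real.sqrt_sq hr.le]
  simp only [hscale, intervalIntegral.integral_const_mul]
  rw [intervalIntegral.integral_comp_div (fun x ↦ √(1 - x ^ 2)) hr.ne', smul_eq_mul]
  ring

theorem batman_as_semicircle_high (a b : ℝ) (ha : 1 ≤ a) (hab : a < b) (hb : b ≤ 3) :
    (1 / (4 * Real.pi)) * ∫ t in a..b, fBat t
      = muST (Real.sqrt (1 + a) / 2) (Real.sqrt (1 + b) / 2) := by
  have integral_fBat : ∫ t in a..b, fBat t
      = 8 * ∫ x in √(1 + a) / 2..√(1 + b) / 2, √(1 - x ^ 2) := calc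
    ∫ t in a..b, fBat t = ∫ t in a..b, √((4 - (1 + t)) / (1 + t)) :=
      intervalIntegral.integral_congr_Ioo_of_le hab.le fun t ht ↦ by
        rw [fBat_of_one_lt_of_lt_three (ha.trans_lt ht.1) (ht.2.trans_le hb)]
        ring_nf
    _ = ∫ s in (1 + a)..(1 + b), √((4 - s) / s) :=
      intervalIntegral.integral_comp_add_left (fun s ↦ √((4 - s) / s)) 1
    _ = 2 * ∫ u in √(1 + a)..√(1 + b), √(2 ^ 2 - u ^ 2) := by
      rw [integral_sqrt_sub_div_self (by linarith) (by linarith)]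
      norm_num
    _ = 8 * ∫ x in √(1 + a) / 2..√(1 + b) / 2, √(1 - x ^ 2) := by
      rw [integral_sqrt_sq_sub_sq two_pos]
      ring
  rw [integral_fBat, muST]
  ring

end
end

section
/- For all integers m ≥ 1 and 0 ≤ l ≤ m, one has Σ_{r=0}^{l} (−1)^l · C(m + 1/2, r) · C(m − 1/2, m − r) · C(m − r, l − r) = (−1)^m · C(m − 1/2, m) · b(2l; 2m). -/
noncomputable section

/-- Generalized binomial coefficient `C(x,n) = x(x-1)⋯(x-n+1)/n!`. -/
def gchoose (x : ℝ) (n : ℕ) : ℝ :=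
  (∏ i ∈ Finset.range n, (x - i)) / (Nat.factorial n)

/-- Chebyshev polynomials of the second kind (as real polynomials). -/
def UPoly : ℕ → Polynomial ℝ
  | 0 => 1
  | 1 => Polynomial.C 2 * Polynomial.X
  | (n + 2) => Polynomial.C 2 * Polynomial.X * UPoly (n + 1) - UPoly n

/-!
Trinomial revision gives `C(m-1/2, m-r) C(m-r, l-r) = C(m-1/2, m-l) C(l-1/2, l-r)`, so the sum over
`r` is, up to sign, a Vandermonde convolution with value `C(m-1/2, m-l) C(m+l, l)`. On the other
side, the Chebyshev recurrence gives `b(2l; 2m) = (-1)^(m-l) C(m+l, 2l) 4^l`. After multiplication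
by the central binomial coefficient `C(2l, l) = 4^l C(l-1/2, l)`, the two sides agree by two further
trinomial revisions.
-/

open Finset Polynomial

section BinomialCoefficients

theorem gchoose_eq_choose (x : ℝ) (n : ℕ) : gchoose x n = Ring.choose x n := by
  rw [Ring.choose_eq_smul, ← aeval_eq_smeval, aeval_def, ← eval_map, descPochhammer_map,
    descPochhammer_eval_eq_prod_range, smul_eq_mul, ← div_eq_inv_mul, gchoose]

theorem sum_choose_mul_choose_mul_choose {R : Type*} [CommRing R] [BinomialRing R] (x y : R)
    {l m : ℕ} (hl : l ≤ m) :
    ∑ r ∈ range (l + 1), Ring.choose y r * Ring.choose x (m - r) * ((m - r).choose (l - r) : R) =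
      Ring.choose x (m - l) * Ring.choose (y + (x - (m - l : ℕ))) l := by
  rw [Ring.add_choose_eq l (Commute.all _ _), Nat.sum_antidiagonal_eq_sum_range_succ_mk, mul_sum]
  refine sum_congr rfl fun r hr => ?_
  have hrl : r ≤ l := mem_range_succ_iff.mp hr
  have revision : ((m - r).choose (l - r) : R) * Ring.choose x (m - r) =
      Ring.choose x (m - l) * Ring.choose (x - (m - l : ℕ)) (l - r) := by
    have h := Ring.choose_smul_choose x (Nat.sub_le_sub_left hrl m)
    rwa [nsmul_eq_mul, Nat.choose_symm_of_eq_add (show m - r = (m - l) + (l - r) by lia),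
      show m - r - (m - l) = l - r by lia] at h
  linear_combination Ring.choose y r * revision

variable {K : Type*} [Field K] [CharZero K]

theorem centralBinom_eq_four_pow_mul_choose (n : ℕ) :
    (n.centralBinom : K) = 4 ^ n * Ring.choose ((n : K) - 1 / 2) n := by
  induction n with
  | zero => simp
  | succ n ih =>
    have absorption : ((n : K) + 1) * Ring.choose ((n : K) + 1 - 1 / 2) (n + 1) =
        (n + 1 - 1 / 2) * Ring.choose ((n : K) - 1 / 2) n := by
      have h := Ring.choose_smul_choose ((n : K) + 1 - 1 / 2) (Nat.le_add_left 1 n)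
      rw [Nat.choose_one_right, nsmul_eq_mul, Ring.choose_one_right, Nat.add_sub_cancel] at h
      convert h using 3 <;> push_cast <;> ring
    have recurrence : ((n : K) + 1) * (n + 1).centralBinom = 2 * (2 * n + 1) * n.centralBinom :=
      mod_cast n.succ_mul_centralBinom_succ
    apply mul_left_cancel₀ (Nat.cast_add_one_ne_zero n : (n : K) + 1 ≠ 0)
    push_cast
    linear_combination recurrence + 2 * (2 * n + 1) * ih - 4 ^ (n + 1) * absorption

theorem choose_sub_half_mul_choose_add {l m : ℕ} (hl : l ≤ m) :
    Ring.choose ((m : K) - 1 / 2) (m - l) * ((m + l).choose l : K) =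
      4 ^ l * Ring.choose ((m : K) - 1 / 2) m * ((m + l).choose (2 * l) : K) := by
  have central_revision : ((m + l).choose (2 * l) : K) * l.centralBinom =
      (m + l).choose l * m.choose l := by
    have h := Nat.choose_mul (n := m + l) (Nat.le_mul_of_pos_left l two_pos)
    rw [Nat.add_sub_cancel, two_mul, Nat.add_sub_cancel, ← two_mul] at h
    exact mod_cast h
  have half_revision : (m.choose l : K) * Ring.choose ((m : K) - 1 / 2) m =
      Ring.choose ((m : K) - 1 / 2) (m - l) * Ring.choose ((l : K) - 1 / 2) l := by
    have h := Ring.choose_smul_choose ((m : K) - 1 / 2) (Nat.sub_le m l)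
    rwa [nsmul_eq_mul, Nat.choose_symm hl, Nat.sub_sub_self hl, Nat.cast_sub hl,
      show (m : K) - 1 / 2 - (m - l) = l - 1 / 2 by ring] at h
  apply mul_right_cancel₀ (Nat.cast_ne_zero.mpr l.centralBinom_ne_zero : (l.centralBinom : K) ≠ 0)
  calc
    _ = 4 ^ l * (m + l).choose l *
          (Ring.choose ((m : K) - 1 / 2) (m - l) * Ring.choose ((l : K) - 1 / 2) l) := by
      rw [centralBinom_eq_four_pow_mul_choose]
      ring
    _ = 4 ^ l * Ring.choose ((m : K) - 1 / 2) m * ((m + l).choose l * m.choose l) := by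
      rw [← half_revision]
      ring
    _ = _ := by
      rw [← central_revision]
      ring

end BinomialCoefficients

section ChebyshevCoefficients

theorem UPoly_eq_chebyshev_U : ∀ n : ℕ, UPoly n = Chebyshev.U ℝ n
  | 0 => by simp [UPoly]
  | 1 => by simp [UPoly, C_ofNat]
  | n + 2 => by
    rw [UPoly, UPoly_eq_chebyshev_U (n + 1), UPoly_eq_chebyshev_U n]
    exact_mod_cast (Chebyshev.U_add_two ℝ n).symm

variable (R : Type*) [CommRing R]

theorem coeff_chebyshev_U_self (n : ℕ) : (Chebyshev.U R n).coeff n = 2 ^ n := by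
  have h : (Chebyshev.U ℤ n).coeff n = 2 ^ n := by
    simpa only [leadingCoeff, Chebyshev.natDegree_U_natCast] using
      Chebyshev.leadingCoeff_U_natCast ℤ n
  rw [← Chebyshev.map_U (Int.castRingHom R), coeff_map, h, map_pow, map_ofNat]

theorem coeff_chebyshev_U_add_two_mul : ∀ j k : ℕ,
    (Chebyshev.U R (j + 2 * k : ℕ)).coeff j = (-1) ^ k * ((j + k).choose j : R) * 2 ^ j
  | 0, k => by simp [coeff_zero_eq_eval_zero]
  | j + 1, 0 => by simpa using coeff_chebyshev_U_self R (j + 1)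
  | j + 1, k + 1 => by
    have recurrence : Chebyshev.U R (j + 1 + 2 * (k + 1) : ℕ) =
        C 2 * (X * Chebyshev.U R (j + 2 * (k + 1) : ℕ)) - Chebyshev.U R (j + 1 + 2 * k : ℕ) := by
      rw [show j + 1 + 2 * (k + 1) = j + 1 + 2 * k + 2 by ring,
        show j + 2 * (k + 1) = j + 1 + 2 * k + 1 by ring, C_ofNat, ← mul_assoc]
      exact_mod_cast Chebyshev.U_add_two R (j + 1 + 2 * k : ℕ)
    have pascal : ((j + 1 + (k + 1)).choose (j + 1) : R) =
        (j + (k + 1)).choose j + (j + 1 + k).choose (j + 1) := by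
      rw [show j + 1 + (k + 1) = j + (k + 1) + 1 by ring, Nat.choose_succ_succ,
        show j + 1 + k = j + (k + 1) by ring, Nat.cast_add]
    rw [recurrence, coeff_sub, coeff_C_mul, coeff_X_mul, coeff_chebyshev_U_add_two_mul j (k + 1),
      coeff_chebyshev_U_add_two_mul (j + 1) k, pascal]
    ring

theorem coeff_UPoly_two_mul {l m : ℕ} (hl : l ≤ m) :
    (UPoly (2 * m)).coeff (2 * l) = (-1) ^ (m - l) * ((m + l).choose (2 * l) : ℝ) * 4 ^ l := by
  have h := coeff_chebyshev_U_add_two_mul ℝ (2 * l) (m - l)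
  rwa [show 2 * l + 2 * (m - l) = 2 * m by lia, show 2 * l + (m - l) = m + l by lia, pow_mul,
    show (2 : ℝ) ^ 2 = 4 by norm_num, ← UPoly_eq_chebyshev_U] at h

end ChebyshevCoefficients

theorem bracket_chebyshev_identity (m : ℕ) (hm : 1 ≤ m) (l : ℕ) (hl : l ≤ m) :
    ∑ r ∈ Finset.range (l + 1),
      (-1 : ℝ) ^ l * gchoose ((m : ℝ) + 1 / 2) r * gchoose ((m : ℝ) - 1 / 2) (m - r) *
        gchoose ((m : ℝ) - (r : ℝ)) (l - r)
      = (-1 : ℝ) ^ m * gchoose ((m : ℝ) - 1 / 2) m * (UPoly (2 * m)).coeff (2 * l) := by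
  have sign : (-1 : ℝ) ^ m * (-1) ^ (m - l) = (-1) ^ l := by
    rw [← pow_add, show m + (m - l) = l + 2 * (m - l) by lia, pow_add, pow_mul, neg_one_sq, one_pow,
      mul_one]
  have upper_argument : (m : ℝ) + 1 / 2 + ((m : ℝ) - 1 / 2 - (m - l : ℕ)) = (m + l : ℕ) := by
    rw [Nat.cast_sub hl, Nat.cast_add]
    ring
  calc
    _ = (-1 : ℝ) ^ l * ∑ r ∈ range (l + 1), Ring.choose ((m : ℝ) + 1 / 2) r *
          Ring.choose ((m : ℝ) - 1 / 2) (m - r) * ((m - r).choose (l - r) : ℝ) := by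
      rw [mul_sum]
      refine sum_congr rfl fun r hr => ?_
      rw [← Nat.cast_sub ((mem_range_succ_iff.mp hr).trans hl)]
      simp only [gchoose_eq_choose, Ring.choose_natCast, mul_assoc]
    _ = (-1 : ℝ) ^ l * (Ring.choose ((m : ℝ) - 1 / 2) (m - l) * ((m + l).choose l : ℝ)) := by
      rw [sum_choose_mul_choose_mul_choose _ _ hl, upper_argument, Ring.choose_natCast]
    _ = (-1 : ℝ) ^ m * gchoose ((m : ℝ) - 1 / 2) m * (UPoly (2 * m)).coeff (2 * l) := by
      rw [choose_sub_half_mul_choose_add hl, coeff_UPoly_two_mul hl, gchoose_eq_choose, ← sign]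
      ring

end
end

section
/- For every τ in the complex upper half-plane ℍ, one has (4τ+1)^{−1/2} · Σ_{n ∈ ℤ} exp(2πi · n² · 4τ/(4τ+1)) = ((1−i)/2) · ( Σ_{n ∈ ℤ, n even} e^{2πi n² τ} + i · Σ_{n ∈ ℤ, n odd} e^{2πi n² τ} ), where the square root is the principal branch. -/
open scoped Classical

noncomputable section

/-!
Write `ϑ(τ) = ∑ exp(πi n² τ)` and `w = 2τ + 1/2`, so that `2 · 4τ/(4τ + 1) = 2 - 1/w`. The left-hand
series is thus `ϑ(-1/w)` by 2-periodicity, and inversion turns it into `√(-iw) ϑ(w)`, where the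
shift by `1/2` multiplies the `n`-th term of `ϑ(2τ)` by `i^(n²)`: by `1` for even `n` and by `i` for
odd `n`. The prefactors combine to `√(-i/2) = (1 - i)/2`: principal powers are multiplicative here
because `arg (4τ + 1) ∈ (0, π)` and `arg (-i/2) = -π/2` add up to an angle in `(-π, π]`.
-/

open Complex

lemma zpow_sq_of_even {G : Type*} [DivisionMonoid G] {z : G} (hz : z ^ 4 = 1) {n : ℤ}
    (hn : Even n) : z ^ (n ^ 2) = 1 := by
  obtain ⟨m, rfl⟩ := hn
  rw [show (m + m) ^ 2 = 4 * m ^ 2 by ring, zpow_mul, zpow_ofNat, hz, one_zpow]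

lemma zpow_sq_of_odd {G₀ : Type*} [GroupWithZero G₀] {z : G₀} (hz : z ^ 4 = 1) {n : ℤ}
    (hn : Odd n) : z ^ (n ^ 2) = z := by
  have hz0 : z ≠ 0 := by
    rintro rfl
    simp at hz
  obtain ⟨m, rfl⟩ := hn
  rw [show (2 * m + 1) ^ 2 = 4 * (m ^ 2 + m) + 1 by ring, zpow_add_one₀ hz0, zpow_mul, zpow_ofNat,
    hz, one_zpow, one_mul]

lemma tsum_ite_even_odd {R : Type*} [NormedRing R] [CompleteSpace R] {f : ℤ → R}
    (hf : Summable f) (c : R) :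
    ∑' n : ℤ, (if Even n then f n else c * f n) =
      (∑' n : ℤ, if Even n then f n else 0) + c * ∑' n : ℤ, if Odd n then f n else 0 := by
  have hEven : Summable fun n : ℤ ↦ if Even n then f n else 0 :=
    (hf.indicator {n | Even n}).congr fun n ↦ by simp [Set.indicator_apply]
  have hOdd : Summable fun n : ℤ ↦ if Odd n then f n else 0 :=
    (hf.indicator {n | Odd n}).congr fun n ↦ by simp [Set.indicator_apply]
  rw [← hOdd.tsum_mul_left, ← hEven.tsum_add (hOdd.mul_left c)]
  refine tsum_congr fun n ↦ ?_
  by_cases hn : Even n <;> simp [hn, ← Int.not_even_iff_odd]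

lemma summable_jacobiTheta_term {τ : ℂ} (hτ : 0 < τ.im) :
    Summable fun n : ℤ ↦ exp (Real.pi * I * (n : ℂ) ^ 2 * τ) := by
  simpa [jacobiTheta₂_term] using (summable_jacobiTheta₂_term_iff 0 τ).mpr hτ

lemma jacobiTheta_neg_one_div {τ : ℂ} (hτ : 0 < τ.im) :
    jacobiTheta (-1 / τ) = (-I * τ) ^ (1 / 2 : ℂ) * jacobiTheta τ := by
  have hS := jacobiTheta_S_smul ⟨τ, hτ⟩
  rwa [UpperHalfPlane.modular_S_smul, UpperHalfPlane.coe_mk, UpperHalfPlane.coe_mk, inv_neg,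
    ← one_div, ← neg_div] at hS

lemma exp_pi_mul_I_mul_sq_mul_add_int_div_two (n k : ℤ) (τ : ℂ) :
    exp (Real.pi * I * (n : ℂ) ^ 2 * (τ + k / 2)) =
      (I ^ k) ^ (n ^ 2) * exp (Real.pi * I * (n : ℂ) ^ 2 * τ) := by
  have hI : (I ^ k) ^ (n ^ 2) = exp (↑(k * n ^ 2) * (Real.pi / 2 * I)) := by
    rw [← zpow_mul, exp_int_mul, exp_pi_div_two_mul_I]
  rw [hI, ← exp_add]
  push_cast
  ring_nf

lemma jacobiTheta_add_int_div_two {τ : ℂ} (hτ : 0 < τ.im) (k : ℤ) :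
    jacobiTheta (τ + k / 2) =
      (∑' n : ℤ, if Even n then exp (Real.pi * I * (n : ℂ) ^ 2 * τ) else 0) +
        I ^ k * ∑' n : ℤ, if Odd n then exp (Real.pi * I * (n : ℂ) ^ 2 * τ) else 0 := by
  have hI : (I ^ k) ^ 4 = 1 := by
    rw [← zpow_natCast, zpow_comm, zpow_natCast, I_pow_four, one_zpow]
  rw [← tsum_ite_even_odd (summable_jacobiTheta_term hτ), jacobiTheta]
  refine tsum_congr fun n ↦ ?_
  rw [exp_pi_mul_I_mul_sq_mul_add_int_div_two]
  split_ifs with hn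
  · rw [zpow_sq_of_even hI hn, one_mul]
  · rw [zpow_sq_of_odd hI (Int.not_even_iff_odd.mp hn)]

lemma cpow_neg_mul_mul_cpow {x y : ℂ} (hx : x ≠ 0) (hy : y ≠ 0)
    (hxy : x.arg + y.arg ∈ Set.Ioc (-Real.pi) Real.pi) (a : ℂ) :
    x ^ (-a) * (x * y) ^ a = y ^ a := by
  rw [cpow_def_of_ne_zero hx, cpow_def_of_ne_zero (mul_ne_zero hx hy), cpow_def_of_ne_zero hy,
    log_mul hx hy hxy, ← exp_add]
  ring_nf

lemma arg_neg_I_div_two : (-I / 2).arg = -(Real.pi / 2) := by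
  have hscale : -I / 2 = ((1 / 2 : ℝ) : ℂ) * -I := by
    push_cast
    ring
  rw [hscale, arg_real_mul _ (by norm_num), arg_neg_I]

lemma neg_I_div_two_cpow_half : (-I / 2) ^ (1 / 2 : ℂ) = (1 - I) / 2 := by
  have hsq : -I / 2 = ((1 - I) / 2) ^ 2 := by linear_combination (-1 / 4 : ℂ) * I_sq
  rw [hsq, one_div, sq_cpow_two_inv (by simp)]

lemma cpow_neg_half_mul_neg_I_mul_div_two_cpow_half {u : ℂ} (hu : u ≠ 0)
    (harg : -(Real.pi / 2) < u.arg) :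
    u ^ (-(1 / 2 : ℂ)) * (-I * (u / 2)) ^ (1 / 2 : ℂ) = (1 - I) / 2 := by
  have hsum : u.arg + (-I / 2).arg ∈ Set.Ioc (-Real.pi) Real.pi := by
    rw [arg_neg_I_div_two]
    constructor <;> linarith [arg_le_pi u, Real.pi_pos]
  rw [show -I * (u / 2) = u * (-I / 2) by ring, cpow_neg_mul_mul_cpow hu (by simp) hsum,
    neg_I_div_two_cpow_half]

theorem theta4_transform_4_1 (τ : ℂ) (hτ : 0 < τ.im) :
    (4 * τ + 1) ^ (-(1 / 2 : ℂ)) *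
        ∑' n : ℤ, Complex.exp (2 * (Real.pi : ℂ) * Complex.I * (n : ℂ) ^ 2 *
          (4 * τ / (4 * τ + 1)))
      = ((1 - Complex.I) / 2) *
          ((∑' n : ℤ, if Even n then
              Complex.exp (2 * (Real.pi : ℂ) * Complex.I * (n : ℂ) ^ 2 * τ) else 0)
            + Complex.I *
              ∑' n : ℤ, if Odd n then
                Complex.exp (2 * (Real.pi : ℂ) * Complex.I * (n : ℂ) ^ 2 * τ) else 0) := by
  have hterm (n : ℤ) (z : ℂ) :
      2 * (Real.pi : ℂ) * I * (n : ℂ) ^ 2 * z = Real.pi * I * (n : ℂ) ^ 2 * (2 * z) := by ring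
  have him : 0 < (4 * τ + 1).im := by simpa using hτ
  have hne : 4 * τ + 1 ≠ 0 := ne_of_apply_ne im him.ne'
  have harg : -(Real.pi / 2) < (4 * τ + 1).arg := by
    linarith [arg_nonneg_iff.mpr him.le, Real.pi_pos]
  have hmoebius : 2 * (4 * τ / (4 * τ + 1)) = 2 + -1 / ((4 * τ + 1) / 2) := by
    field_simp
    ring
  have hshift : (4 * τ + 1) / 2 = 2 * τ + (1 : ℤ) / 2 := by
    push_cast
    ring
  simp only [hterm]
  rw [← jacobiTheta, hmoebius, jacobiTheta_two_add, jacobiTheta_neg_one_div (by simpa using him),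
    ← mul_assoc, cpow_neg_half_mul_neg_I_mul_div_two_cpow_half hne harg, hshift,
    jacobiTheta_add_int_div_two (by simpa using hτ), zpow_one]

end
end

section
/- For every τ in the complex upper half-plane ℍ, one has (8τ+1)^{−1/2} · Σ_{n ∈ ℤ} exp(2πi · n² · 4τ/(8τ+1)) = Σ_{n ∈ ℤ, n odd} e^{2πi n² τ}, where the square root is the principal branch. -/
open scoped Classical

noncomputable section

/-!
Write `θ₃ = jacobiTheta`, `θ₄ = jacobiTheta₂ (1 / 2)`, and put `u = 8τ + 1`. The argument of the
left-hand theta series is `8τ / (8τ + 1) = -1 / u + 1`, and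
`θ₃ (-1 / u + 1) = θ₄ (-1 / u) = (-iu)^(1/2) θ₂ u = (-iu)^(1/2) e^(πi/4) θ₂ (8τ)`.
The eighth root of unity acquired by `θ₂` under `u = 8τ + 1` is exactly the ratio between the
principal branches of `u^(1/2)` and `(-iu)^(1/2)`, and `θ₂ (8τ)` is the sum over odd squares.
-/

open Complex
open scoped Real

theorem neg_I_mul_cpow {u : ℂ} (hu : 0 ≤ u.im) (s : ℂ) :
    (-I * u) ^ s = cexp (-(π * I / 2) * s) * u ^ s := by
  have hI : -I ≠ 0 := neg_ne_zero.mpr I_ne_zero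
  rcases eq_or_ne u 0 with rfl | hu0
  · rcases eq_or_ne s 0 with rfl | hs <;> simp [*]
  have hlog : log (-I * u) = log (-I) + log u := by
    rw [log_mul_eq_add_log_iff hI hu0, arg_neg_I]
    have := arg_nonneg_iff.mpr hu
    have := arg_le_pi u
    have := Real.pi_pos
    constructor <;> linarith
  rw [cpow_def_of_ne_zero (mul_ne_zero hI hu0), cpow_def_of_ne_zero hu0, hlog, log_neg_I,
    ← Complex.exp_add]
  ring_nf

theorem tsum_ite_odd {M : Type*} [AddCommMonoid M] [TopologicalSpace M] (f : ℤ → M) :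
    ∑' n : ℤ, (if Odd n then f n else 0) = ∑' k : ℤ, f (2 * k + 1) := by
  have hinj : Function.Injective fun k : ℤ ↦ 2 * k + 1 := fun a b h ↦ by grind
  rw [← hinj.tsum_eq]
  · exact tsum_congr fun k ↦ if_pos ⟨k, rfl⟩
  · intro n hn
    obtain ⟨k, hk⟩ : Odd n := by_contra fun h ↦ hn (if_neg h)
    exact ⟨k, hk.symm⟩

theorem jacobiTheta₂_add_one_right (z τ : ℂ) :
    jacobiTheta₂ z (τ + 1) = jacobiTheta₂ (z + 1 / 2) τ := by
  refine tsum_congr fun n ↦ ?_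
  obtain ⟨k, hk⟩ : Even (n ^ 2 - n) := by simp [parity_simps]
  have hk : (n : ℂ) ^ 2 - n = k + k := mod_cast hk
  rw [jacobiTheta₂_term, jacobiTheta₂_term, Complex.exp_eq_exp_iff_exists_int]
  exact ⟨k, by linear_combination π * I * hk⟩

/-- Jacobi's theta constant `θ₂`, in the normalisation with nome `exp (π * I * τ)`. -/
def jacobiThetaTwo (τ : ℂ) : ℂ := ∑' n : ℤ, cexp (π * I * (n + 1 / 2) ^ 2 * τ)

theorem jacobiThetaTwo_eq_jacobiTheta₂ (τ : ℂ) :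
    jacobiThetaTwo τ = cexp (π * I * τ / 4) * jacobiTheta₂ (τ / 2) τ := by
  rw [jacobiThetaTwo, jacobiTheta₂, ← tsum_mul_left]
  refine tsum_congr fun n ↦ ?_
  rw [jacobiTheta₂_term, ← Complex.exp_add]
  ring_nf

theorem jacobiThetaTwo_add_one (τ : ℂ) :
    jacobiThetaTwo (τ + 1) = cexp (π * I / 4) * jacobiThetaTwo τ := by
  have hz : (τ + 1) / 2 + 1 / 2 = τ / 2 + 1 := by ring
  rw [jacobiThetaTwo_eq_jacobiTheta₂, jacobiThetaTwo_eq_jacobiTheta₂, jacobiTheta₂_add_one_right,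
    hz, jacobiTheta₂_add_left, ← mul_assoc, ← Complex.exp_add]
  ring_nf

theorem jacobiThetaTwo_four_mul (τ : ℂ) :
    jacobiThetaTwo (4 * τ) = ∑' n : ℤ, if Odd n then cexp (π * I * (n : ℂ) ^ 2 * τ) else 0 := by
  rw [tsum_ite_odd]
  refine tsum_congr fun k ↦ ?_
  push_cast
  ring_nf

theorem jacobiTheta₂_half_neg_inv {τ : ℂ} (hτ : τ ≠ 0) :
    jacobiTheta₂ (1 / 2) (-1 / τ) = (-I * τ) ^ (1 / 2 : ℂ) * jacobiThetaTwo τ := by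
  have hroot : (-I * τ) ^ (1 / 2 : ℂ) ≠ 0 := by simp [cpow_eq_zero_iff, hτ]
  have hz : τ / 2 / τ = 1 / 2 := by field_simp
  have hexp : cexp (π * I * τ / 4) * cexp (-π * I * (τ / 2) ^ 2 / τ) = 1 := by
    rw [← Complex.exp_add, Complex.exp_eq_one_iff]
    exact ⟨0, by field_simp; ring⟩
  rw [jacobiThetaTwo_eq_jacobiTheta₂, jacobiTheta₂_functional_equation (τ / 2) τ, hz]
  calc
    _ = (-I * τ) ^ (1 / 2 : ℂ) * (1 / (-I * τ) ^ (1 / 2 : ℂ)) *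
        (cexp (π * I * τ / 4) * cexp (-π * I * (τ / 2) ^ 2 / τ)) *
        jacobiTheta₂ (1 / 2) (-1 / τ) := by
      rw [mul_one_div_cancel hroot, hexp, one_mul, one_mul]
    _ = _ := by ring

theorem jacobiTheta_neg_inv_add_one {τ : ℂ} (hτ : 0 < τ.im) :
    jacobiTheta (-1 / τ + 1) = cexp (-(π * I / 4)) * τ ^ (1 / 2 : ℂ) * jacobiThetaTwo τ := by
  have hτ0 : τ ≠ 0 := by rintro rfl; simp at hτ
  rw [jacobiTheta_eq_jacobiTheta₂, jacobiTheta₂_add_one_right, zero_add,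
    jacobiTheta₂_half_neg_inv hτ0, neg_I_mul_cpow hτ.le]
  ring_nf

theorem theta4_transform_8_1 (τ : ℂ) (hτ : 0 < τ.im) :
    (8 * τ + 1) ^ (-(1 / 2 : ℂ)) *
        ∑' n : ℤ, Complex.exp (2 * (Real.pi : ℂ) * Complex.I * (n : ℂ) ^ 2 *
          (4 * τ / (8 * τ + 1)))
      = ∑' n : ℤ, if Odd n then
          Complex.exp (2 * (Real.pi : ℂ) * Complex.I * (n : ℂ) ^ 2 * τ) else 0 := by
  have hu : 0 < (8 * τ + 1).im := by simpa using hτ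
  have hu0 : 8 * τ + 1 ≠ 0 := fun h ↦ by simp [h] at hu
  have hroot : (8 * τ + 1) ^ (1 / 2 : ℂ) ≠ 0 := by simp [cpow_eq_zero_iff, hu0]
  have hmoebius : -1 / (8 * τ + 1) + 1 = 2 * (4 * τ / (8 * τ + 1)) := by field_simp; ring
  calc
    _ = (8 * τ + 1) ^ (-(1 / 2 : ℂ)) * jacobiTheta (-1 / (8 * τ + 1) + 1) := by
      rw [hmoebius]
      refine congrArg _ (tsum_congr fun n ↦ ?_)
      ring_nf
    _ = (8 * τ + 1) ^ (-(1 / 2 : ℂ)) * (cexp (-(π * I / 4)) * (8 * τ + 1) ^ (1 / 2 : ℂ) *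
        (cexp (π * I / 4) * jacobiThetaTwo (8 * τ))) := by
      rw [jacobiTheta_neg_inv_add_one hu, jacobiThetaTwo_add_one]
    _ = jacobiThetaTwo (8 * τ) := by
      rw [cpow_neg, Complex.exp_neg]
      field_simp
    _ = _ := by
      rw [show 8 * τ = 4 * (2 * τ) by ring, jacobiThetaTwo_four_mul]
      refine tsum_congr fun n ↦ ?_
      ring_nf

end
end
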